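/- (Theorem 2: Suboptimality bound for MPC with dynamic move blocking, intermediate absolute form.) Let M = N − N_B ≥ 2, let γ > 0 be a real number with (γ+1)^{M−2} > γ^M, suppose Assumption (γ, M) holds together with the relaxed-increment condition V_M(f(x,μ_M(x))) ≤ V_{M−1}(f(x,μ_M(x))) + (γ^M/(γ+1)^{M−2})·ℓ(x, μ_M(x)) for all x ∈ X. Fix a blocked input sequence ũ : Fin N_B → U and an initial state x, with N_B-step prediction x_{N_B} and blocked cost δ(x). Then the infinite-horizon cost of the dynamic-move-blocking closed loop satisfies δ(x) + V_∞^{μ_M}(x_{N_B}) ≤ δ(x) + υ(γ, M)·V_∞(x_{N_B}), where υ(γ, M) = (γ+1)^{M−2} / ((γ+1)^{M−2} − γ^M). -/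

import Mathlib

open scoped ENNReal

/-- Open-loop trajectory: `traj f x u k` is the state after `k` steps of the
dynamics `f` starting from `x` under the input sequence `u`. -/
noncomputable def traj {X U : Type*} (f : X → U → X) (x : X) (u : ℕ → U) : ℕ → X
  | 0 => x
  | k + 1 => f (traj f x u k) (u k)

/-- Extension of a finite input sequence `u : Fin N → U` to `ℕ → U`
(arbitrary values after time `N`). -/
noncomputable def extSeq {U : Type*} [Nonempty U] {N : ℕ} (u : Fin N → U) : ℕ → U :=
  fun k => if h : k < N then u ⟨k, h⟩ else Classical.arbitrary U

/-- Finite-horizon value function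
`V f ℓ N x = ⨅_{u : Fin N → U} ∑_{k=0}^{N-1} ℓ(x_u(k), u(k))`, with `V 0 ≡ 0`. -/
noncomputable def V {X U : Type*} [Nonempty U] (f : X → U → X) (ℓ : X → U → ℝ≥0∞)
    (N : ℕ) (x : X) : ℝ≥0∞ :=
  ⨅ u : Fin N → U, ∑ k ∈ Finset.range N, ℓ (traj f x (extSeq u) k) (extSeq u k)

/-- Infinite-horizon value function
`Vinf f ℓ x = ⨅_{u : ℕ → U} ∑_{k=0}^{∞} ℓ(x_u(k), u(k))`. -/
noncomputable def Vinf {X U : Type*} (f : X → U → X) (ℓ : X → U → ℝ≥0∞) (x : X) : ℝ≥0∞ :=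
  ⨅ u : ℕ → U, ∑' k : ℕ, ℓ (traj f x u k) (u k)

/-- Closed-loop trajectory under the feedback law `μ`. -/
noncomputable def clTraj {X U : Type*} (f : X → U → X) (μ : X → U) (x : X) : ℕ → X
  | 0 => x
  | k + 1 => f (clTraj f μ x k) (μ (clTraj f μ x k))

/-- Infinite-horizon closed-loop cost of the feedback law `μ`:
`Vcl f ℓ μ x = ∑_{k=0}^{∞} ℓ(x_k, μ(x_k))`. -/
noncomputable def Vcl {X U : Type*} (f : X → U → X) (ℓ : X → U → ℝ≥0∞) (μ : X → U)
    (x : X) : ℝ≥0∞ :=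
  ∑' k : ℕ, ℓ (clTraj f μ x k) (μ (clTraj f μ x k))

/-!
Combined with dynamic programming, the increment condition makes `V_M` a relaxed Lyapunov function:
one closed-loop step lowers it by at least `1 - c` times the stage cost, where
`c = γ ^ M / (γ + 1) ^ (M - 2) < 1`. Telescoping along the closed loop gives
`(1 - c) * V_∞^{μ_M} ≤ V_M ≤ V_∞`, and `υ(γ, M) = (1 - c)⁻¹`.
-/

theorem traj_congr {X U : Type*} (f : X → U → X) (x : X) {u v : ℕ → U} {k : ℕ}
    (huv : ∀ i < k, u i = v i) : traj f x u k = traj f x v k := by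
  induction k with
  | zero => rfl
  | succ k ih =>
    rw [traj, traj, ih fun i hi => huv i (hi.trans k.lt_succ_self), huv k k.lt_succ_self]

theorem extSeq_apply_of_lt {U : Type*} [Nonempty U] {N k : ℕ} (u : Fin N → U) (hk : k < N) :
    extSeq u k = u ⟨k, hk⟩ :=
  dif_pos hk

theorem V_le_Vinf {X U : Type*} [Nonempty U] (f : X → U → X) (ℓ : X → U → ℝ≥0∞)
    (N : ℕ) (x : X) : V f ℓ N x ≤ Vinf f ℓ x := by
  refine le_iInf fun u => ?_
  set v : ℕ → U := extSeq fun i : Fin N => u i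
  have hvu : ∀ k < N, v k = u k := fun _ hk => extSeq_apply_of_lt _ hk
  calc V f ℓ N x
      ≤ ∑ k ∈ Finset.range N, ℓ (traj f x v k) (v k) := iInf_le _ _
    _ = ∑ k ∈ Finset.range N, ℓ (traj f x u k) (u k) := by
        refine Finset.sum_congr rfl fun k hk => ?_
        have hkN := Finset.mem_range.mp hk
        rw [hvu k hkN, traj_congr f x fun i hi => hvu i (hi.trans hkN)]
    _ ≤ ∑' k, ℓ (traj f x u k) (u k) := ENNReal.sum_le_tsum _

theorem sum_range_add_le_of_add_succ_le {α : Type*} [AddCommMonoid α] [Preorder α]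
    [IsOrderedAddMonoid α] {a w : ℕ → α} (h : ∀ k, a k + w (k + 1) ≤ w k) (n : ℕ) :
    ∑ k ∈ Finset.range n, a k + w n ≤ w 0 := by
  induction n with
  | zero => simp
  | succ n ih =>
    rw [Finset.sum_range_succ, add_assoc]
    exact (add_le_add_right (h n) _).trans ih

theorem mul_Vcl_le_of_decrease {X U : Type*} {f : X → U → X} {ℓ : X → U → ℝ≥0∞} {κ : X → U}
    {W : X → ℝ≥0∞} {a : ℝ≥0∞} (h : ∀ x, a * ℓ x (κ x) + W (f x (κ x)) ≤ W x) (x : X) :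
    a * Vcl f ℓ κ x ≤ W x := by
  rw [Vcl, ← ENNReal.tsum_mul_left]
  refine ENNReal.tsum_le_of_sum_range_le fun n => ?_
  exact le_self_add.trans <|
    sum_range_add_le_of_add_succ_le (w := fun k => W (clTraj f κ x k))
      (fun k => h (clTraj f κ x k)) n

theorem one_sub_mul_add_le_of_le_add_mul {c s v v' w : ℝ≥0∞} (hc : c ≤ 1)
    (hv : s + w ≤ v) (hv' : v' ≤ w + c * s) : (1 - c) * s + v' ≤ v :=
  calc (1 - c) * s + v'
      ≤ (1 - c) * s + (w + c * s) := add_le_add_right hv' _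
    _ = (1 - c + c) * s + w := by ring
    _ = s + w := by rw [tsub_add_cancel_of_le hc, one_mul]
    _ ≤ v := hv

theorem ofReal_div_sub_eq_inv_one_sub {p q : ℝ} (hq : 0 ≤ q) (hqp : q < p) :
    ENNReal.ofReal (p / (p - q)) = (1 - ENNReal.ofReal (q / p))⁻¹ := by
  have hp : 0 < p := hq.trans_lt hqp
  have hpq : 0 < (p - q) / p := div_pos (sub_pos.mpr hqp) hp
  rw [← ENNReal.ofReal_one, ← ENNReal.ofReal_sub _ (div_nonneg hq hp.le), ← div_self hp.ne',
    ← sub_div, ← ENNReal.ofReal_inv_of_pos hpq, inv_div]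

theorem dmb_suboptimality_abs_general {X U : Type*} [Nonempty U]
    (f : X → U → X) (ℓ : X → U → ℝ≥0∞) (M : ℕ) {NB : ℕ} (κ : X → U) {c : ℝ≥0∞} (hc : c < 1)
    (hDP : ∀ x, ℓ x (κ x) + V f ℓ (M - 1) (f x (κ x)) ≤ V f ℓ M x)
    (hinc : ∀ x, V f ℓ M (f x (κ x)) ≤ V f ℓ (M - 1) (f x (κ x)) + c * ℓ x (κ x))
    (ut : Fin NB → U) (x : X) :
    (∑ k ∈ Finset.range NB, ℓ (traj f x (extSeq ut) k) (extSeq ut k)) +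
        Vcl f ℓ κ (traj f x (extSeq ut) NB) ≤
      (∑ k ∈ Finset.range NB, ℓ (traj f x (extSeq ut) k) (extSeq ut k)) +
        (1 - c)⁻¹ * Vinf f ℓ (traj f x (extSeq ut) NB) := by
  set y := traj f x (extSeq ut) NB
  have hdecrease : ∀ z, (1 - c) * ℓ z (κ z) + V f ℓ M (f z (κ z)) ≤ V f ℓ M z := fun z =>
    one_sub_mul_add_le_of_le_add_mul hc.le (hDP z) (hinc z)
  have hcost : (1 - c) * Vcl f ℓ κ y ≤ Vinf f ℓ y :=
    (mul_Vcl_le_of_decrease hdecrease y).trans (V_le_Vinf f ℓ M y)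
  have hne_zero : 1 - c ≠ 0 := (tsub_pos_of_lt hc).ne'
  have hne_top : 1 - c ≠ ∞ := ENNReal.sub_ne_top ENNReal.one_ne_top
  exact add_le_add_right ((ENNReal.mul_le_iff_le_inv hne_zero hne_top).mp hcost) _

/-- Theorem 2 (intermediate absolute form): under the hypotheses of Theorem 1,
the infinite-horizon cost of the dynamic-move-blocking closed loop satisfies
`δ(x) + V_∞^{μ_M}(x_{N_B}) ≤ δ(x) + υ(γ, M)·V_∞(x_{N_B})`, with
`υ(γ, M) = (γ+1)^{M-2} / ((γ+1)^{M-2} - γ^M)` and `M = N - N_B`. -/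
theorem dmb_suboptimality_abs {X U : Type*} [Nonempty X] [Nonempty U]
    (f : X → U → X) (ℓ : X → U → ℝ≥0∞) (N NB : ℕ) (hM : 2 ≤ N - NB)
    (γ : ℝ) (hγ : 0 < γ)
    (hstrict : γ ^ (N - NB) < (γ + 1) ^ (N - NB - 2))
    (μ : ℕ → X → U)
    (hDP : ∀ k, 2 ≤ k → k ≤ N - NB → ∀ x : X,
      V f ℓ k x = ℓ x (μ k x) + V f ℓ (k - 1) (f x (μ k x)))
    (h2 : ∀ x : X, V f ℓ 2 x ≤ ENNReal.ofReal (γ + 1) * V f ℓ 1 x)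
    (hk : ∀ k, 2 ≤ k → k ≤ N - NB → ∀ x : X,
      V f ℓ k x ≤ ENNReal.ofReal (γ + 1) * ℓ x (μ k x))
    (hinc : ∀ x : X,
      V f ℓ (N - NB) (f x (μ (N - NB) x)) ≤
        V f ℓ (N - NB - 1) (f x (μ (N - NB) x)) +
          ENNReal.ofReal (γ ^ (N - NB) / (γ + 1) ^ (N - NB - 2)) *
            ℓ x (μ (N - NB) x))
    (ut : Fin NB → U) (x : X) :
    (∑ k ∈ Finset.range NB, ℓ (traj f x (extSeq ut) k) (extSeq ut k)) +
        Vcl f ℓ (μ (N - NB)) (traj f x (extSeq ut) NB) ≤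
      (∑ k ∈ Finset.range NB, ℓ (traj f x (extSeq ut) k) (extSeq ut k)) +
        ENNReal.ofReal
            ((γ + 1) ^ (N - NB - 2) / ((γ + 1) ^ (N - NB - 2) - γ ^ (N - NB))) *
          Vinf f ℓ (traj f x (extSeq ut) NB) := by
  have hc : γ ^ (N - NB) / (γ + 1) ^ (N - NB - 2) < 1 := (div_lt_one (by positivity)).mpr hstrict
  rw [ofReal_div_sub_eq_inv_one_sub (by positivity) hstrict]
  exact dmb_suboptimality_abs_general f ℓ (N - NB) (μ (N - NB)) (ENNReal.ofReal_lt_one.mpr hc)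
    (fun z => (hDP _ hM le_rfl z).ge) hinc ut x
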